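/- arXiv:2510.23560 — 4 statements merged into one kernel-verified Lean document; each statement's English description precedes it below -/
import Mathlib

section
/- Let α, β, γ > 0 be real numbers and let f ∈ 𝒜. Then for every z ∈ 𝔻 the recurrence relation z·(ℰ^γ_{α,β} f)′(z) = (1 − γ)·ℰ^γ_{α,β} f(z) + γ·ℰ^{γ+1}_{α,β} f(z) holds. -/
open Complex Metric Set Filter

/-- Coefficient of the normalized three-parameter Mittag-Leffler function:
`Γ(β)·(γ)_n / (Γ(αn+β)·n!)` where `(γ)_n = Γ(γ+n)/Γ(γ)`. -/
noncomputable def mlCoeff (α β γ : ℝ) (n : ℕ) : ℝ :=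
  Real.Gamma β * (Real.Gamma (γ + n) / Real.Gamma γ) /
    (Real.Gamma (α * n + β) * n.factorial)

/-- The Mittag-Leffler operator `ℰ^γ_{α,β}` acting on a function with coefficient
sequence `a` (where `a n` is the coefficient of `z^(n+2)`, i.e. the paper's `a_{n+2}`):
`ℰ^γ_{α,β} f(z) = z + Σ_{n=1}^∞ [Γ(β)(γ)_n/(Γ(αn+β)n!)] a_{n+1} z^{n+1}`. -/
noncomputable def mlOp (α β γ : ℝ) (a : ℕ → ℂ) (z : ℂ) : ℂ :=
  z + ∑' n : ℕ, (mlCoeff α β γ (n + 1) : ℂ) * a n * z ^ (n + 2)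

/-- `f ∈ 𝒜` with coefficient sequence `a`: `f` is analytic on the unit disc and
`f(z) = z + Σ_{n=1}^∞ a_{n+1} z^{n+1}` (here `a n` is the paper's `a_{n+2}`). -/
def InA (f : ℂ → ℂ) (a : ℕ → ℂ) : Prop :=
  AnalyticOnNhd ℂ f (ball 0 1) ∧
    ∀ z ∈ ball (0 : ℂ) 1, HasSum (fun n : ℕ => a n * z ^ (n + 2)) (f z - z)

/-- Subordination `F ≺ G` on the unit disc. -/
def IsSubordinate (F G : ℂ → ℂ) : Prop :=
  ∃ ϑ : ℂ → ℂ, AnalyticOnNhd ℂ ϑ (ball 0 1) ∧ ϑ 0 = 0 ∧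
    (∀ z ∈ ball (0 : ℂ) 1, ϑ z ∈ ball (0 : ℂ) 1) ∧
    ∀ z ∈ ball (0 : ℂ) 1, F z = G (ϑ z)

/-- The cardioid function `h_c(z) = 1 + 4z/3 + 2z²/3`. -/
noncomputable def hC (z : ℂ) : ℂ := 1 + 4 * z / 3 + 2 * z ^ 2 / 3

/-!
Write `ℰ^γ f(z) = ∑ cₙ(γ) aₙ₊₁ z^(n+1)` with `a₁ = 1`. The operator `z d/dz` multiplies the `n`-th
term by `n + 1`, and `γ (γ+1)ₙ = (γ+n) (γ)ₙ` gives `(n+1) cₙ(γ) = (1-γ) cₙ(γ) + γ cₙ(γ+1)`.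
Differentiating termwise is legitimate because `cₙ(γ)` grows at most polynomially: `(γ)ₙ / n!` does,
and `1 / Γ(αn+β)` is bounded.
-/

open Asymptotics Polynomial

theorem hasSum_mul_deriv_tsum_mul_pow {ι : Type*} {c : ι → ℂ} {e : ι → ℕ} {w z : ℂ}
    (hw : Summable fun i => c i * w ^ e i) (hz : ‖z‖ < ‖w‖) :
    HasSum (fun i => e i * (c i * z ^ e i)) (z * deriv (fun y => ∑' i, c i * y ^ e i) z) := by
  have norm_term_le (i : ι) (y : ℂ) (hy : y ∈ ball 0 ‖w‖) :
      ‖c i * y ^ e i‖ ≤ ‖c i * w ^ e i‖ := by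
    rw [mem_ball_zero_iff] at hy
    simp only [norm_mul, norm_pow]
    gcongr
  have mul_deriv_term (i : ι) :
      z * deriv (fun y => c i * y ^ e i) z = e i * (c i * z ^ e i) := by
    rw [deriv_const_mul_field, deriv_pow_field]
    cases e i with
    | zero => simp
    | succ k => rw [Nat.add_sub_cancel, pow_succ]; ring
  simpa only [mul_deriv_term] using (hasSum_deriv_of_summable_norm hw.norm
    (fun i => by fun_prop) isOpen_ball norm_term_le (mem_ball_zero_iff.2 hz)).mul_left z

theorem summable_mul_mul_pow_of_isBigO {𝕜 : Type*} [NormedField 𝕜] [CompleteSpace 𝕜]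
    {c b : ℕ → 𝕜} {K m : ℕ} {w z : 𝕜} (hc : c =O[atTop] fun n => (n : ℝ) ^ K)
    (hb : (fun n => b n * w ^ (n + m)) =O[atTop] fun _ => (1 : ℝ)) (hz : ‖z‖ < ‖w‖) :
    Summable fun n => c n * b n * z ^ (n + m) := by
  have w_ne_zero : w ≠ 0 := norm_pos_iff.1 ((norm_nonneg z).trans_lt hz)
  have ratio_lt_one : ‖z / w‖ < 1 := by
    rwa [norm_div, div_lt_one (norm_pos_iff.2 w_ne_zero)]
  have term_eq (n : ℕ) :
      c n * (b n * w ^ (n + m)) * (z / w) ^ (n + m) = c n * b n * z ^ (n + m) := by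
    rw [div_pow]
    field_simp
  have geometric : (fun n => (z / w) ^ (n + m)) =O[atTop] fun n => ‖z / w‖ ^ n :=
    .of_norm_le fun n => by
      rw [norm_pow]
      exact pow_le_pow_of_le_one (norm_nonneg _) ratio_lt_one.le (Nat.le_add_right n m)
  have dominating : Summable fun n : ℕ => (n : ℝ) ^ K * ‖z / w‖ ^ n :=
    summable_pow_mul_geometric_of_norm_lt_one K (by rwa [norm_norm])
  refine summable_of_isBigO_nat dominating ?_
  simpa only [term_eq, mul_one] using (hc.mul hb).mul geometric

theorem norm_ascPochhammer_eval_le {R : Type*} [SeminormedRing R] [NormOneClass R] {x : R} {K : ℕ}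
    (hx : ‖x‖ ≤ K) (n : ℕ) :
    ‖(ascPochhammer R n).eval x‖ ≤ n.factorial * (n + 1 : ℝ) ^ K := by
  induction n with
  | zero => simp
  | succ n ih =>
    have bernoulli : 1 + K * (1 / (n + 1 : ℝ)) ≤ (1 + 1 / (n + 1 : ℝ)) ^ K :=
      one_add_mul_le_pow (by linarith [show 0 ≤ 1 / (n + 1 : ℝ) by positivity]) K
    have factor_le : ‖x + n‖ ≤ (n + 1 : ℝ) * (1 + 1 / (n + 1 : ℝ)) ^ K :=
      calc ‖x + n‖ ≤ ‖x‖ + ‖(n : R)‖ := norm_add_le _ _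
        _ ≤ K + n := by gcongr; simpa using Nat.norm_cast_le (α := R) n
        _ ≤ (n + 1 : ℝ) * (1 + K * (1 / (n + 1 : ℝ))) := by field_simp; linarith
        _ ≤ (n + 1 : ℝ) * (1 + 1 / (n + 1 : ℝ)) ^ K := by gcongr
    calc ‖(ascPochhammer R (n + 1)).eval x‖
        ≤ ‖(ascPochhammer R n).eval x‖ * ‖x + n‖ := by
          rw [ascPochhammer_succ_eval]
          exact norm_mul_le _ _
      _ ≤ n.factorial * (n + 1 : ℝ) ^ K * ((n + 1 : ℝ) * (1 + 1 / (n + 1 : ℝ)) ^ K) := by gcongr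
      _ = (n + 1 : ℝ) * n.factorial * ((n + 1) * (1 + 1 / (n + 1 : ℝ))) ^ K := by
          rw [mul_pow]
          ring
      _ = (n + 1).factorial * ((n + 1 : ℕ) + 1 : ℝ) ^ K := by
          rw [Nat.factorial_succ]
          push_cast
          field_simp

theorem mul_ascPochhammer_eval_add_one {R : Type*} [CommSemiring R] (x : R) (n : ℕ) :
    x * (ascPochhammer R n).eval (x + 1) = (x + n) * (ascPochhammer R n).eval x := by
  have eval_succ := congrArg (eval x) (ascPochhammer_succ_left R n)
  rw [ascPochhammer_succ_eval] at eval_succ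
  simpa [mul_comm] using eval_succ.symm

theorem ne_neg_natCast_of_pos {x : ℝ} (hx : 0 < x) (k : ℕ) : x ≠ -k :=
  ((neg_nonpos.2 k.cast_nonneg).trans_lt hx).ne'

theorem add_one_ne_neg_natCast {x : ℝ} (hx : ∀ k : ℕ, x ≠ -k) (k : ℕ) : x + 1 ≠ -k :=
  fun h => hx (k + 1) (by push_cast; linarith)

theorem realGamma_add_nat_div_realGamma_eq {x : ℝ} (hx : ∀ k : ℕ, x ≠ -k) (n : ℕ) :
    Real.Gamma (x + n) / Real.Gamma x = (ascPochhammer ℝ n).eval x := by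
  have complex_eq := Complex.Gamma_add_nat_div_Gamma_eq (n := n) (x : ℂ) fun k => mod_cast hx k
  have eval_ofReal : (ascPochhammer ℂ n).eval (x : ℂ) = ((ascPochhammer ℝ n).eval x : ℝ) := by
    rw [← ascPochhammer_map Complex.ofRealHom, ← Complex.ofRealHom_eq_coe, eval_map_apply]
    rfl
  rw [eval_ofReal, ← Complex.ofReal_natCast, ← Complex.ofReal_add, Complex.Gamma_ofReal,
    Complex.Gamma_ofReal] at complex_eq
  exact_mod_cast complex_eq

theorem isBigO_inv_realGamma_mul_natCast_add {α : ℝ} (hα : 0 ≤ α) (β : ℝ) :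
    (fun n : ℕ => (Real.Gamma (α * n + β))⁻¹) =O[atTop] fun _ => (1 : ℝ) := by
  rcases hα.eq_or_lt with rfl | hα
  · simpa using isBigO_const_const (Real.Gamma β)⁻¹ (one_ne_zero (α := ℝ)) (atTop (α := ℕ))
  have argument_atTop : Tendsto (fun n : ℕ => α * n + β) atTop atTop :=
    tendsto_atTop_add_const_right _ _ (tendsto_natCast_atTop_atTop.const_mul_atTop hα)
  refine .of_bound' ?_
  filter_upwards [argument_atTop.eventually_ge_atTop 2] with n hn
  have one_le_Gamma : 1 ≤ Real.Gamma (α * n + β) :=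
    Real.Gamma_two ▸ Real.Gamma_strictMonoOn_Ici.monotoneOn self_mem_Ici hn hn
  rw [norm_inv, norm_one, Real.norm_of_nonneg (zero_le_one.trans one_le_Gamma)]
  exact inv_le_one_of_one_le₀ one_le_Gamma

/-- The coefficients of `f(z) = z + ∑ a n * z ^ (n + 2)`, leading `1` included:
`normalizedCoeff a n` is the coefficient of `z ^ (n + 1)`, so that `mlOp` becomes the single series
`∑ mlCoeff α β γ n * normalizedCoeff a n * z ^ (n + 1)`. -/
def normalizedCoeff (a : ℕ → ℂ) : ℕ → ℂ
  | 0 => 1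
  | n + 1 => a n

theorem InA.exists_norm_lt_summable {f : ℂ → ℂ} {a : ℕ → ℂ} {z : ℂ} (hf : InA f a)
    (hz : z ∈ ball (0 : ℂ) 1) :
    ∃ w : ℂ, ‖z‖ < ‖w‖ ∧ Summable fun n => a n * w ^ (n + 2) := by
  obtain ⟨r, hzr, hr⟩ := exists_between (mem_ball_zero_iff.1 hz)
  have norm_r : ‖(r : ℂ)‖ = r := Complex.norm_of_nonneg ((norm_nonneg z).trans hzr.le)
  exact ⟨r, hzr.trans_eq norm_r.symm, (hf.2 r (mem_ball_zero_iff.2 (norm_r.trans_lt hr))).summable⟩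

section MittagLeffler

variable {α β γ : ℝ}

theorem mlCoeff_eq_ascPochhammer (hγ : ∀ k : ℕ, γ ≠ -k) (n : ℕ) :
    mlCoeff α β γ n =
      Real.Gamma β * (Real.Gamma (α * n + β))⁻¹ * ((ascPochhammer ℝ n).eval γ / n.factorial) := by
  rw [mlCoeff, realGamma_add_nat_div_realGamma_eq hγ]
  ring

theorem mlCoeff_zero (hβ : ∀ k : ℕ, β ≠ -k) (hγ : ∀ k : ℕ, γ ≠ -k) : mlCoeff α β γ 0 = 1 := by
  simp [mlCoeff, Real.Gamma_ne_zero hβ, Real.Gamma_ne_zero hγ]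

theorem mul_mlCoeff_add_one (hγ : ∀ k : ℕ, γ ≠ -k) (n : ℕ) :
    γ * mlCoeff α β (γ + 1) n = (γ + n) * mlCoeff α β γ n := by
  rw [mlCoeff_eq_ascPochhammer hγ, mlCoeff_eq_ascPochhammer (add_one_ne_neg_natCast hγ)]
  linear_combination Real.Gamma β * (Real.Gamma (α * n + β))⁻¹ / n.factorial *
    mul_ascPochhammer_eval_add_one γ n

theorem exists_mlCoeff_isBigO_pow (hα : 0 ≤ α) (β : ℝ) (hγ : ∀ k : ℕ, γ ≠ -k) :
    ∃ K : ℕ, mlCoeff α β γ =O[atTop] fun n => (n : ℝ) ^ K := by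
  obtain ⟨K, hK⟩ := exists_nat_ge ‖γ‖
  have pochhammer_isBigO : (fun n : ℕ => (ascPochhammer ℝ n).eval γ / n.factorial) =O[atTop]
      fun n => (n + 1 : ℝ) ^ K := .of_norm_le fun n => by
    rw [norm_div, Real.norm_natCast, div_le_iff₀' (by positivity)]
    exact norm_ascPochhammer_eval_le hK n
  have one_isBigO : (fun _ : ℕ => (1 : ℝ)) =O[atTop] fun n => (n : ℝ) :=
    ((isLittleO_const_id_atTop 1).comp_tendsto tendsto_natCast_atTop_atTop).isBigO
  have succ_isBigO : (fun n : ℕ => (n + 1 : ℝ)) =O[atTop] fun n => (n : ℝ) :=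
    (isBigO_refl _ _).add one_isBigO
  refine ⟨K, ?_⟩
  simpa only [← mlCoeff_eq_ascPochhammer hγ, one_mul] using
    ((isBigO_inv_realGamma_mul_natCast_add hα β).const_mul_left (Real.Gamma β)).mul
      (pochhammer_isBigO.trans (succ_isBigO.pow K))

variable {a : ℕ → ℂ} {w z : ℂ}

theorem summable_mlCoeff_mul_normalizedCoeff_mul_pow (hα : 0 ≤ α) (β : ℝ) (hγ : ∀ k : ℕ, γ ≠ -k)
    (ha : Summable fun n => a n * w ^ (n + 2)) (hz : ‖z‖ < ‖w‖) :
    Summable fun n => (mlCoeff α β γ n : ℂ) * normalizedCoeff a n * z ^ (n + 1) := by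
  obtain ⟨K, hK⟩ := exists_mlCoeff_isBigO_pow hα β hγ
  have summable_at_w : Summable fun n => normalizedCoeff a n * w ^ (n + 1) :=
    (summable_nat_add_iff 1).1 ha
  exact summable_mul_mul_pow_of_isBigO (Complex.isBigO_ofReal_left.2 hK)
    (summable_at_w.tendsto_atTop_zero.isBigO_one ℝ) hz

theorem hasSum_mlOp (hα : 0 ≤ α) (hβ : ∀ k : ℕ, β ≠ -k) (hγ : ∀ k : ℕ, γ ≠ -k)
    (ha : Summable fun n => a n * w ^ (n + 2)) (hz : ‖z‖ < ‖w‖) :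
    HasSum (fun n => (mlCoeff α β γ n : ℂ) * normalizedCoeff a n * z ^ (n + 1))
      (mlOp α β γ a z) := by
  have summable_terms := summable_mlCoeff_mul_normalizedCoeff_mul_pow hα β hγ ha hz
  convert summable_terms.hasSum using 1
  rw [summable_terms.tsum_eq_zero_add, mlCoeff_zero hβ hγ]
  simp [mlOp, normalizedCoeff]

theorem hasSum_mul_deriv_mlOp (hα : 0 ≤ α) (hβ : ∀ k : ℕ, β ≠ -k) (hγ : ∀ k : ℕ, γ ≠ -k)
    (ha : Summable fun n => a n * w ^ (n + 2)) (hz : ‖z‖ < ‖w‖) :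
    HasSum (fun n => ((n + 1 : ℕ) : ℂ) * (mlCoeff α β γ n * normalizedCoeff a n * z ^ (n + 1)))
      (z * deriv (mlOp α β γ a) z) := by
  obtain ⟨r, hzr, hrw⟩ := exists_between hz
  have norm_r : ‖(r : ℂ)‖ = r := Complex.norm_of_nonneg ((norm_nonneg z).trans hzr.le)
  have mlOp_eventuallyEq : mlOp α β γ a =ᶠ[nhds z]
      fun y => ∑' n, (mlCoeff α β γ n : ℂ) * normalizedCoeff a n * y ^ (n + 1) := by
    filter_upwards [isOpen_ball.mem_nhds (mem_ball_zero_iff.2 hz)] with y hy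
    exact (hasSum_mlOp hα hβ hγ ha (mem_ball_zero_iff.1 hy)).tsum_eq.symm
  rw [mlOp_eventuallyEq.deriv_eq]
  exact hasSum_mul_deriv_tsum_mul_pow
    (summable_mlCoeff_mul_normalizedCoeff_mul_pow hα β hγ ha (norm_r.trans_lt hrw))
    (hzr.trans_eq norm_r.symm)

end MittagLeffler

theorem stmt0_general {α β γ : ℝ} (hα : 0 ≤ α) (hβ : ∀ k : ℕ, β ≠ -k) (hγ : ∀ k : ℕ, γ ≠ -k)
    {a : ℕ → ℂ} {w z : ℂ} (ha : Summable fun n => a n * w ^ (n + 2)) (hz : ‖z‖ < ‖w‖) :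
    z * deriv (mlOp α β γ a) z
      = (1 - (γ : ℂ)) * mlOp α β γ a z + (γ : ℂ) * mlOp α β (γ + 1) a z := by
  have hasSum_rhs := ((hasSum_mlOp hα hβ hγ ha hz).mul_left (1 - (γ : ℂ))).add
    ((hasSum_mlOp hα hβ (add_one_ne_neg_natCast hγ) ha hz).mul_left (γ : ℂ))
  refine (hasSum_mul_deriv_mlOp hα hβ hγ ha hz).unique (hasSum_rhs.congr_fun ?_)
  intro n
  have coeff_recurrence : (γ : ℂ) * mlCoeff α β (γ + 1) n = (γ + n) * mlCoeff α β γ n :=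
    mod_cast mul_mlCoeff_add_one hγ n
  push_cast
  linear_combination -(normalizedCoeff a n * z ^ (n + 1)) * coeff_recurrence

/-- recurrence `z(ℰ^γ_{α,β}f)'(z) = (1-γ)ℰ^γ_{α,β}f(z) + γℰ^{γ+1}_{α,β}f(z)`. -/
theorem stmt0 (α β γ : ℝ) (hα : 0 < α) (hβ : 0 < β) (hγ : 0 < γ)
    (f : ℂ → ℂ) (a : ℕ → ℂ) (hf : InA f a) :
    ∀ z ∈ ball (0 : ℂ) 1,
      z * deriv (mlOp α β γ a) z
        = (1 - (γ : ℂ)) * mlOp α β γ a z + (γ : ℂ) * mlOp α β (γ + 1) a z := by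
  intro z hz
  obtain ⟨w, hzw, ha⟩ := hf.exists_norm_lt_summable hz
  exact stmt0_general hα.le (ne_neg_natCast_of_pos hβ) (ne_neg_natCast_of_pos hγ) ha hzw
end

section
/- Let γ ≥ 1 be real and for z ∈ 𝔻 set I(z) = ∫₀¹ u^{γ−1} e^{4zu/3 + z²u²/3} du and, whenever I(z) ≠ 0, q(z) = e^{4z/3 + z²/3}/I(z) − γ + 1. Then for every z ∈ 𝔻 with I(z) ≠ 0 one has q(z) + γ − 1 ≠ 0 and q solves the Briot–Bouquet differential equation q(z) + z·q′(z)/(q(z) + γ − 1) = 1 + 4z/3 + 2z²/3. -/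
open Complex Metric Set

/-- `I(z) = ∫₀¹ u^{γ-1} e^{4zu/3 + z²u²/3} du`. -/
noncomputable def Ifun (γ : ℝ) (z : ℂ) : ℂ :=
  ∫ u in (0:ℝ)..1, ((u ^ (γ - 1) : ℝ) : ℂ) *
    Complex.exp (4 * z * (u : ℂ) / 3 + z ^ 2 * (u : ℂ) ^ 2 / 3)

/-- `q(z) = e^{4z/3+z²/3}/I(z) - γ + 1`. -/
noncomputable def qFun (γ : ℝ) (z : ℂ) : ℂ :=
  Complex.exp (4 * z / 3 + z ^ 2 / 3) / Ifun γ z - (γ : ℂ) + 1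

/-!
With `F(z) = exp(4z/3 + z²/3)`, the integral `I(z) = ∫₀¹ u^{γ-1} F(uz) du` satisfies
`z I' + γ I = F`: differentiate under the integral sign and integrate `u^γ · d/du F(uz)` by parts.
Taking the logarithmic derivative of `F / I = q + γ - 1` turns this linear equation into the
Briot–Bouquet equation `q + z q' / (q + γ - 1) = 1 + z F' / F`. Nothing but the value of `F' / F`
depends on the choice of the holomorphic function `F`.
-/

section StarConvex

variable {V X : Type*} [AddCommGroup V] [Module ℝ V] [TopologicalSpace V] [ContinuousSMul ℝ V]
  [TopologicalSpace X] {f : V → X} {s : Set V}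

theorem continuousOn_comp_smul_of_starConvex (hstar : StarConvex ℝ 0 s) (hf : ContinuousOn f s) :
    ContinuousOn (fun p : V × ℝ ↦ f (p.2 • p.1)) (s ×ˢ Icc 0 1) :=
  hf.comp (by fun_prop) fun _ hp ↦ starConvex_zero_iff.1 hstar hp.1 hp.2.1 hp.2.2

theorem continuousOn_Icc_comp_smul_of_starConvex (hstar : StarConvex ℝ 0 s)
    (hf : ContinuousOn f s) {z : V} (hz : z ∈ s) :
    ContinuousOn (fun u : ℝ ↦ f (u • z)) (Icc 0 1) :=
  (continuousOn_comp_smul_of_starConvex hstar hf).comp (f := fun u : ℝ ↦ (z, u))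
    (by fun_prop) fun _ hu ↦ ⟨hz, hu⟩

end StarConvex

section BernardiIntegral

open MeasureTheory

variable {E : Type*} [NormedAddCommGroup E] [NormedSpace ℂ E]
  {f : ℂ → E} {s : Set ℂ} {c z : ℂ}

/-- The unnormalised Bernardi integral `z⁻ᶜ ∫₀ᶻ tᶜ⁻¹ f(t) dt`, written with the substitution
`t = uz` so that no branch of `zᶜ` has to be chosen. -/
noncomputable def bernardiIntegral (c : ℂ) (f : ℂ → E) (z : ℂ) : E :=
  ∫ u in (0 : ℝ)..1, (u : ℂ) ^ (c - 1) • f (u • z)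

theorem intervalIntegrable_ofReal_cpow_sub_one (hc : 0 < c.re) :
    IntervalIntegrable (fun u : ℝ ↦ (u : ℂ) ^ (c - 1)) volume 0 1 :=
  intervalIntegral.intervalIntegrable_cpow' (by simpa using hc)

variable [CompleteSpace E]

theorem hasDerivAt_integral_smul_comp_smul {w : ℝ → ℂ} (hw : IntervalIntegrable w volume 0 1)
    (hs : IsOpen s) (hstar : StarConvex ℝ 0 s) (hf : DifferentiableOn ℂ f s) (hz : z ∈ s) :
    HasDerivAt (fun z ↦ ∫ u in (0 : ℝ)..1, w u • f (u • z))
      (∫ u in (0 : ℝ)..1, w u • u • deriv f (u • z)) z := by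
  have hf' : ContinuousOn (deriv f) s := (hf.deriv hs).continuousOn
  obtain ⟨r, hr, hball⟩ := nhds_basis_closedBall.mem_iff.1 (hs.mem_nhds hz)
  obtain ⟨C, hC⟩ := ((isCompact_closedBall z r).prod isCompact_Icc).exists_bound_of_continuousOn
    ((continuousOn_snd.smul (continuousOn_comp_smul_of_starConvex hstar hf')).mono
      (prod_mono_left hball))
  have weighted_integrable {g : ℝ → E} (hg : ContinuousOn g (Icc 0 1)) :
      IntervalIntegrable (fun u ↦ w u • g u) volume 0 1 :=
    hw.smul_continuousOn (by rwa [uIcc_of_le zero_le_one])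
  have hint (x : ℂ) (hx : x ∈ s) : IntervalIntegrable (fun u ↦ w u • f (u • x)) volume 0 1 :=
    weighted_integrable (continuousOn_Icc_comp_smul_of_starConvex hstar hf.continuousOn hx)
  have hint' : IntervalIntegrable (fun u ↦ w u • u • deriv f (u • z)) volume 0 1 :=
    weighted_integrable
      (continuousOn_id.smul (continuousOn_Icc_comp_smul_of_starConvex hstar hf' hz))
  refine (intervalIntegral.hasDerivAt_integral_of_dominated_loc_of_deriv_le
    (F := fun z u ↦ w u • f (u • z)) (F' := fun z u ↦ w u • u • deriv f (u • z))
    (bound := fun u ↦ ‖w u‖ * C) (closedBall_mem_nhds z hr)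
    ?_ (hint z hz) hint'.aestronglyMeasurable_restrict_uIoc ?_ (hw.norm.mul_const C) ?_).2
  · filter_upwards [hs.mem_nhds hz] with x hx using (hint x hx).aestronglyMeasurable_restrict_uIoc
  · refine .of_forall fun u hu x hx ↦ ?_
    rw [uIoc_of_le zero_le_one] at hu
    rw [norm_smul]
    gcongr
    exact hC (x, u) ⟨hx, Ioc_subset_Icc_self hu⟩
  · refine .of_forall fun u hu x hx ↦ ?_
    rw [uIoc_of_le zero_le_one] at hu
    have hux : u • x ∈ s := starConvex_zero_iff.1 hstar (hball hx) hu.1.le hu.2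
    have hfux := (hf.differentiableAt (hs.mem_nhds hux)).hasDerivAt
    exact ((hfux.scomp x ((hasDerivAt_id x).const_smul u)).const_smul (w u)).congr_deriv (by simp)

theorem hasDerivAt_bernardiIntegral (hc : 0 < c.re) (hs : IsOpen s) (hstar : StarConvex ℝ 0 s)
    (hf : DifferentiableOn ℂ f s) (hz : z ∈ s) :
    HasDerivAt (bernardiIntegral c f) (bernardiIntegral (c + 1) (deriv f) z) z := by
  refine (hasDerivAt_integral_smul_comp_smul (intervalIntegrable_ofReal_cpow_sub_one hc)
    hs hstar hf hz).congr_deriv (intervalIntegral.integral_congr_uIoo fun u hu ↦ ?_)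
  rw [uIoo_of_le zero_le_one] at hu
  have hu0 : (u : ℂ) ≠ 0 := ofReal_ne_zero.2 hu.1.ne'
  simp only [← Complex.coe_smul u (deriv f _), smul_smul, add_sub_cancel_right,
    cpow_sub _ _ hu0, cpow_one, div_mul_cancel₀ _ hu0]

theorem smul_bernardiIntegral_deriv_add_smul_bernardiIntegral (hc : 0 < c.re) (hs : IsOpen s)
    (hstar : StarConvex ℝ 0 s) (hf : DifferentiableOn ℂ f s) (hz : z ∈ s) :
    z • bernardiIntegral (c + 1) (deriv f) z + c • bernardiIntegral c f z = f z := by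
  have hc0 : c ≠ 0 := by rintro rfl; simp at hc
  have hf_path := continuousOn_Icc_comp_smul_of_starConvex hstar hf.continuousOn hz
  have hf'_path := continuousOn_Icc_comp_smul_of_starConvex hstar (hf.deriv hs).continuousOn hz
  rw [← uIcc_of_le zero_le_one] at hf_path hf'_path
  have hpow_deriv (u : ℝ) (hu : u ∈ Ioo (min 0 1) (max 0 1)) :
      HasDerivAt (fun u : ℝ ↦ (u : ℂ) ^ c) (c * (u : ℂ) ^ (c - 1)) u :=
    hasDerivAt_ofReal_cpow_const (by simpa using hu.1.ne') hc0
  have hf_path_deriv (u : ℝ) (hu : u ∈ Ioo (min 0 1) (max 0 1)) :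
      HasDerivAt (fun u : ℝ ↦ f (u • z)) (z • deriv f (u • z)) u := by
    simp only [zero_le_one, min_eq_left, max_eq_right] at hu
    have huz : u • z ∈ s := starConvex_zero_iff.1 hstar hz hu.1.le hu.2.le
    have hfuz := (hf.differentiableAt (hs.mem_nhds huz)).hasDerivAt
    exact (hfuz.scomp u ((hasDerivAt_id u).smul_const z)).congr_deriv (by simp)
  have by_parts := intervalIntegral.integral_smul_deriv_eq_deriv_smul_of_hasDerivAt
    (continuous_ofReal_cpow_const hc).continuousOn hf_path hpow_deriv hf_path_deriv
    ((intervalIntegrable_ofReal_cpow_sub_one hc).const_mul c)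
    (hf'_path.const_smul z).intervalIntegrable
  simp only [smul_comm _ z, mul_smul, intervalIntegral.integral_smul, ofReal_one, one_cpow,
    one_smul, ofReal_zero, zero_cpow hc0, zero_smul, sub_zero] at by_parts
  simp only [bernardiIntegral, add_sub_cancel_right, by_parts, sub_add_cancel]

end BernardiIntegral

theorem div_bernardiIntegral_add_mul_logDeriv {f : ℂ → ℂ} {s : Set ℂ} {c z : ℂ} (hc : 0 < c.re)
    (hs : IsOpen s) (hstar : StarConvex ℝ 0 s) (hf : DifferentiableOn ℂ f s) (hz : z ∈ s)
    (hfz : f z ≠ 0) (hB : bernardiIntegral c f z ≠ 0) :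
    f z / bernardiIntegral c f z + z * logDeriv (fun x ↦ f x / bernardiIntegral c f x) z
      = c + z * logDeriv f z := by
  have hB' := hasDerivAt_bernardiIntegral hc hs hstar hf hz
  have hode := smul_bernardiIntegral_deriv_add_smul_bernardiIntegral hc hs hstar hf hz
  rw [logDeriv_div z hfz hB (hf.differentiableAt (hs.mem_nhds hz)) hB'.differentiableAt,
    logDeriv_apply (bernardiIntegral c f), hB'.deriv]
  simp only [smul_eq_mul] at hode
  field_simp
  linear_combination -hode

/-- The function `F` with `F(0) = 1` and `1 + z F'(z) / F(z) = h_c(z)` for the cardioid function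
`h_c(z) = 1 + 4z/3 + 2z²/3`. -/
noncomputable def cardioidExp (z : ℂ) : ℂ :=
  exp (4 * z / 3 + z ^ 2 / 3)

theorem hasDerivAt_cardioidExp (z : ℂ) :
    HasDerivAt cardioidExp (cardioidExp z * (4 / 3 + 2 * z / 3)) z := by
  have hexponent := (((hasDerivAt_id z).const_mul 4).div_const 3).add
    (((hasDerivAt_id z).pow 2).div_const 3)
  exact hexponent.cexp.congr_deriv (by simp [cardioidExp])

theorem logDeriv_cardioidExp (z : ℂ) : logDeriv cardioidExp z = 4 / 3 + 2 * z / 3 := by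
  rw [logDeriv_apply, (hasDerivAt_cardioidExp z).deriv]
  exact mul_div_cancel_left₀ _ (exp_ne_zero _)

theorem Ifun_eq_bernardiIntegral (γ : ℝ) : Ifun γ = bernardiIntegral γ cardioidExp := by
  ext z
  refine intervalIntegral.integral_congr fun u hu ↦ ?_
  rw [uIcc_of_le zero_le_one] at hu
  simp only [cardioidExp, ofReal_cpow hu.1, real_smul, smul_eq_mul]
  push_cast
  ring_nf

theorem qFun_add_sub_one (γ : ℝ) (z : ℂ) :
    qFun γ z + γ - 1 = cardioidExp z / Ifun γ z := by
  rw [qFun, cardioidExp]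
  ring

theorem deriv_qFun (γ : ℝ) (z : ℂ) :
    deriv (qFun γ) z = deriv (fun x ↦ cardioidExp x / Ifun γ x) z := by
  simp only [← qFun_add_sub_one, deriv_sub_const, deriv_add_const]

theorem stmt9_general {γ : ℝ} (hγ : 0 < γ) {z : ℂ} (hI : Ifun γ z ≠ 0) :
    qFun γ z + (γ : ℂ) - 1 ≠ 0 ∧
      qFun γ z + z * deriv (qFun γ) z / (qFun γ z + (γ : ℂ) - 1)
        = 1 + 4 * z / 3 + 2 * z ^ 2 / 3 := by
  have hexp : cardioidExp z ≠ 0 := exp_ne_zero _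
  have hdiff : DifferentiableOn ℂ cardioidExp univ :=
    fun x _ ↦ (hasDerivAt_cardioidExp x).differentiableAt.differentiableWithinAt
  rw [deriv_qFun, mul_div_assoc, qFun_add_sub_one]
  refine ⟨div_ne_zero hexp hI, ?_⟩
  rw [Ifun_eq_bernardiIntegral] at hI
  have hode := div_bernardiIntegral_add_mul_logDeriv (c := γ) (by simpa using hγ) isOpen_univ
    (starConvex_univ 0) hdiff (mem_univ z) hexp hI
  rw [← Ifun_eq_bernardiIntegral, logDeriv_cardioidExp, logDeriv_apply] at hode
  linear_combination hode + qFun_add_sub_one γ z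

/-- `q` solves the Briot–Bouquet equation
`q(z) + z q'(z)/(q(z)+γ-1) = 1 + 4z/3 + 2z²/3` wherever `I(z) ≠ 0`. -/
theorem stmt9 (γ : ℝ) (hγ : 1 ≤ γ) :
    ∀ z ∈ ball (0 : ℂ) 1, Ifun γ z ≠ 0 →
      qFun γ z + (γ : ℂ) - 1 ≠ 0 ∧
      qFun γ z + z * deriv (qFun γ) z / (qFun γ z + (γ : ℂ) - 1)
        = 1 + 4 * z / 3 + 2 * z ^ 2 / 3 :=
  fun _ _ hI ↦ stmt9_general (zero_lt_one.trans_le hγ) hI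
end

section
/- (Hallenbeck–Ruscheweyh lemma, as used in the paper) Let h be analytic on 𝔻 with h(0) = 1, injective on 𝔻 and with convex image h(𝔻), and let φ be analytic on 𝔻 with φ(0) = 1. Let μ be a complex number with Re μ > 0. If φ(z) + z·φ′(z)/μ ≺ h(z), then φ ≺ h̃ and h̃ ≺ h, where h̃(z) = μ ∫₀¹ u^{μ−1} h(uz) du (equivalently h̃(z) = (μ/z^μ) ∫₀^z t^{μ−1} h(t) dt). -/
open Complex Metric Set

/-!
Write `q = h̃`, so that `q + z q' / μ = h`. If `p` is not subordinate to a univalent `g`, Jack's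
lemma for `g⁻¹ ∘ p` yields a contact `p(z) = g(ζ)`, `z p'(z) = m ζ g'(ζ)` with `‖z‖ < ‖ζ‖` and
`1 ≤ m`. For convex univalent `h`, on the other hand, the image of the disc of radius `‖ζ‖` is
convex and lies on one side of its tangent at `h(ζ)`, that is,
`0 ≤ Re ((h(ζ) - h(w)) / (ζ h'(ζ)))` for `‖w‖ ≤ ‖ζ‖`, strictly if `‖w‖ < ‖ζ‖`.

This support inequality rules out contacts of `φ` with `h`, in particular of `q` with `h`, hence
`q ≺ h`. With `h - q = z q' / μ` it then says `0 ≤ Re (q' / (μ h'))`, strictly by the open mapping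
theorem, which makes `q ∘ h⁻¹` injective on the convex set `h(𝔻)`. So `q` is univalent, and the
support inequality also rules out contacts of `φ` with `q`.
-/

open Filter Function Topology
open scoped ComplexOrder

section Univalent

variable {f : ℂ → ℂ} {U : Set ℂ}

lemma not_eventually_eq_of_injOn {z : ℂ} (hinj : InjOn f U) (hU : U ∈ 𝓝 z) :
    ¬ ∀ᶠ w in 𝓝 z, f w = f z := by
  intro hconst
  have hself : ∀ᶠ w in 𝓝[≠] z, w = z := nhdsWithin_le_nhds <| by
    filter_upwards [hconst, hU] with w hw hwU using hinj hwU (mem_of_mem_nhds hU) hw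
  obtain ⟨w, hw, hwz⟩ := (hself.and self_mem_nhdsWithin).exists
  exact hwz hw

lemma eventually_deriv_ne_zero_of_injOn {z : ℂ} (hf : AnalyticAt ℂ f z) (hinj : InjOn f U)
    (hU : U ∈ 𝓝 z) : ∀ᶠ w in 𝓝[≠] z, deriv f w ≠ 0 := by
  refine hf.deriv.eventually_eq_zero_or_eventually_ne_zero.resolve_left fun hzero => ?_
  have horder := hf.analyticOrderAt_deriv_add_one
  rw [analyticOrderAt_eq_top.2 hzero, top_add, eq_comm, analyticOrderAt_eq_top] at horder
  exact not_eventually_eq_of_injOn hinj hU (horder.mono fun w => sub_eq_zero.1)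

lemma isOpen_image_of_injOn (hU : IsOpen U) (hf : AnalyticOnNhd ℂ f U) (hinj : InjOn f U)
    {V : Set ℂ} (hV : IsOpen V) (hVU : V ⊆ U) : IsOpen (f '' V) := by
  refine isOpen_iff_mem_nhds.2 ?_
  rintro _ ⟨z, hz, rfl⟩
  exact (hf z (hVU hz)).eventually_constant_or_nhds_le_map_nhds.resolve_left
    (not_eventually_eq_of_injOn hinj (hU.mem_nhds (hVU hz))) (image_mem_map (hV.mem_nhds hz))

lemma continuousOn_invFunOn (hU : IsOpen U) (hf : AnalyticOnNhd ℂ f U) (hinj : InjOn f U) :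
    ContinuousOn (invFunOn f U) (f '' U) := by
  refine IsOpenMap.continuousOn_image_of_leftInvOn (fun V hV => ?_) hinj.leftInvOn_invFunOn
  rw [domRestrict_eq, image_comp]
  exact isOpen_image_of_injOn hU hf hinj (hU.isOpenMap_subtype_val V hV)
    (Subtype.coe_image_subset U V)

lemma continuousAt_invFunOn (hU : IsOpen U) (hf : AnalyticOnNhd ℂ f U) (hinj : InjOn f U)
    {z : ℂ} (hz : z ∈ U) : ContinuousAt (invFunOn f U) (f z) :=
  (continuousOn_invFunOn hU hf hinj).continuousAt <|
    (isOpen_image_of_injOn hU hf hinj hU subset_rfl).mem_nhds (mem_image_of_mem f hz)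

lemma tendsto_invFunOn_nhdsNE (hU : IsOpen U) (hf : AnalyticOnNhd ℂ f U) (hinj : InjOn f U)
    {z : ℂ} (hz : z ∈ U) : Tendsto (invFunOn f U) (𝓝[≠] f z) (𝓝[≠] z) := by
  have hcont : Tendsto (invFunOn f U) (𝓝 (f z)) (𝓝 z) := by
    simpa only [hinj.leftInvOn_invFunOn hz] using
      (continuousAt_invFunOn hU hf hinj hz).tendsto
  refine tendsto_nhdsWithin_iff.2 ⟨hcont.mono_left nhdsWithin_le_nhds, ?_⟩
  filter_upwards [self_mem_nhdsWithin, nhdsWithin_le_nhds <|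
    (isOpen_image_of_injOn hU hf hinj hU subset_rfl).mem_nhds (mem_image_of_mem f hz)]
    with w hw hwU hwz
  exact hw (by rw [mem_singleton_iff, ← hwz, invFunOn_eq hwU])

-- Critical points of `f` are isolated, so the inverse is differentiable off a discrete set and
-- continuous there: the singularities are removable.
lemma analyticOnNhd_invFunOn (hU : IsOpen U) (hf : AnalyticOnNhd ℂ f U) (hinj : InjOn f U) :
    AnalyticOnNhd ℂ (invFunOn f U) (f '' U) := by
  rintro _ ⟨z, hz, rfl⟩
  have hopen : IsOpen (f '' U) := isOpen_image_of_injOn hU hf hinj hU subset_rfl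
  refine analyticAt_of_differentiable_on_punctured_nhds_of_continuousAt ?_
    (continuousAt_invFunOn hU hf hinj hz)
  filter_upwards [(tendsto_invFunOn_nhdsNE hU hf hinj hz).eventually
      (eventually_deriv_ne_zero_of_injOn (hf z hz) hinj (hU.mem_nhds hz)),
    nhdsWithin_le_nhds (hopen.mem_nhds (mem_image_of_mem f hz))] with w hderiv hw
  have hinv : ∀ᶠ v in 𝓝 w, f (invFunOn f U v) = v := by
    filter_upwards [hopen.mem_nhds hw] with v hv using invFunOn_eq hv
  exact (HasDerivAt.of_local_left_inverse
    ((continuousOn_invFunOn hU hf hinj).continuousAt (hopen.mem_nhds hw))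
    (hf _ (invFunOn_mem hw)).differentiableAt.hasDerivAt hderiv hinv).differentiableAt

lemma deriv_invFunOn_mul_deriv (hU : IsOpen U) (hf : AnalyticOnNhd ℂ f U) (hinj : InjOn f U)
    {z : ℂ} (hz : z ∈ U) : deriv (invFunOn f U) (f z) * deriv f z = 1 := by
  have hcomp := (analyticOnNhd_invFunOn hU hf hinj _
    (mem_image_of_mem f hz)).differentiableAt.hasDerivAt.comp z
      (hf z hz).differentiableAt.hasDerivAt
  refine hcomp.unique ((hasDerivAt_id z).congr_of_eventuallyEq ?_)
  filter_upwards [hU.mem_nhds hz] with w hw using hinj.leftInvOn_invFunOn hw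

lemma deriv_ne_zero_of_injOn (hU : IsOpen U) (hf : AnalyticOnNhd ℂ f U) (hinj : InjOn f U)
    {z : ℂ} (hz : z ∈ U) : deriv f z ≠ 0 :=
  right_ne_zero_of_mul (deriv_invFunOn_mul_deriv hU hf hinj hz ▸ one_ne_zero)

lemma hasDerivAt_invFunOn (hU : IsOpen U) (hf : AnalyticOnNhd ℂ f U) (hinj : InjOn f U)
    {z : ℂ} (hz : z ∈ U) : HasDerivAt (invFunOn f U) (deriv f z)⁻¹ (f z) := by
  rw [← eq_inv_of_mul_eq_one_left (deriv_invFunOn_mul_deriv hU hf hinj hz)]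
  exact (analyticOnNhd_invFunOn hU hf hinj _ (mem_image_of_mem f hz)).differentiableAt.hasDerivAt

end Univalent

section RealPart

lemma re_inv_pos {a : ℂ} (ha : 0 < a.re) : 0 < (a⁻¹).re := by
  rw [inv_re]
  exact div_pos ha (normSq_pos.2 (ne_of_apply_ne re ha.ne'))

lemma const_or_re_pos_of_re_nonneg {f : ℂ → ℂ} {U : Set ℂ} (hU : IsOpen U)
    (hUc : IsPreconnected U) (hf : AnalyticOnNhd ℂ f U) (hre : ∀ z ∈ U, 0 ≤ (f z).re) :
    (∃ c, ∀ z ∈ U, f z = c) ∨ ∀ z ∈ U, 0 < (f z).re := by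
  refine (hf.is_constant_or_isOpen hUc).imp_right fun hopen z hz => ?_
  have hsub : f '' U ⊆ interior {w : ℂ | 0 ≤ w.re} :=
    interior_maximal (image_subset_iff.2 hre) (hopen U subset_rfl hU)
  rw [interior_setOfPred_le_re] at hsub
  exact hsub (mem_image_of_mem f hz)

-- Noshiro–Warschawski: `Re (c f / (b - a))` increases strictly along the segment from `a` to `b`.
lemma injOn_of_re_mul_deriv_pos {f : ℂ → ℂ} {V : Set ℂ} {c : ℂ} (hV : IsOpen V)
    (hconv : Convex ℝ V) (hf : DifferentiableOn ℂ f V)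
    (hre : ∀ v ∈ V, 0 < (c * deriv f v).re) : InjOn f V := by
  intro a ha b hb hab
  by_contra hne
  have hba : b - a ≠ 0 := sub_ne_zero.2 (Ne.symm hne)
  have hmem : ∀ t ∈ Icc (0 : ℝ) 1, a + t * (b - a) ∈ V := fun t ht => by
    simpa using hconv.add_smul_sub_mem ha hb ht
  have hderiv : ∀ t ∈ Icc (0 : ℝ) 1,
      HasDerivAt (fun s : ℝ => (c / (b - a) * f (a + s * (b - a))).re)
        (c * deriv f (a + t * (b - a))).re t := by
    intro t ht
    have hline : HasDerivAt (fun s : ℂ => a + s * (b - a)) (b - a) t := by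
      simpa using ((hasDerivAt_id (t : ℂ)).mul_const (b - a)).const_add a
    have hft := (hf.differentiableAt (hV.mem_nhds (hmem t ht))).hasDerivAt
    refine ((hft.comp (t : ℂ) hline).const_mul (c / (b - a))).real_of_complex.congr_deriv ?_
    congr 1
    field_simp
  have hmono := strictMonoOn_of_deriv_pos (convex_Icc 0 1)
    (fun t ht => (hderiv t ht).continuousAt.continuousWithinAt) fun t ht => by
      rw [(hderiv t (interior_subset ht)).deriv]
      exact hre _ (hmem t (interior_subset ht))
  simpa [hab] using hmono (left_mem_Icc.2 zero_le_one) (right_mem_Icc.2 zero_le_one) zero_lt_one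

lemma re_mul_sub_nonpos_of_isMaxOn {F : ℂ → ℂ} {F' a b : ℂ} {s : Set ℂ}
    (hF : HasDerivAt F F' a) (hmax : IsMaxOn (fun w => (F w).re) s a)
    (hseg : openSegment ℝ a b ⊆ s) : (F' * (b - a)).re ≤ 0 := by
  have hre := (reCLM.hasFDerivAt.comp a (hF.hasFDerivAt.restrictScalars ℝ)).hasFDerivWithinAt
    (s := s)
  simpa [mul_comm] using hmax.localize.hasFDerivWithinAt_nonpos hre
    (sub_mem_posTangentConeAt_of_openSegment_subset hseg)

lemma nonneg_of_forall_re_mul_le {a : ℂ} (ha : ∀ ζ : ℂ, ‖ζ‖ ≤ 1 → (a * ζ).re ≤ a.re) : 0 ≤ a := by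
  refine re_eq_norm.1 (le_antisymm (re_le_norm a) ?_)
  rcases eq_or_ne a 0 with rfl | ha0
  · simp
  have hnorm : ‖a‖ ≠ 0 := norm_ne_zero_iff.2 ha0
  have hrot : a * (starRingEnd ℂ a / ‖a‖) = ‖a‖ := by
    have hne : (‖a‖ : ℂ) ≠ 0 := ofReal_ne_zero.2 hnorm
    rw [mul_div_assoc', mul_conj', div_eq_iff hne, sq]
  simpa [hrot] using ha (starRingEnd ℂ a / ‖a‖) (by simp [hnorm])

lemma mul_deriv_nonneg_of_isMaxOn_re {F : ℂ → ℂ} {z : ℂ} (hF : DifferentiableAt ℂ F z)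
    (hmax : IsMaxOn (fun w => (F w).re) (ball 0 ‖z‖) z) : 0 ≤ z * deriv F z := by
  refine nonneg_of_forall_re_mul_le fun ζ hζ => ?_
  rcases eq_or_ne (ζ * z) z with heq | hne
  · rw [mul_right_comm, mul_comm z ζ, heq]
  have hmem : ζ * z ∈ closedBall 0 ‖z‖ := by
    simpa using mul_le_of_le_one_left (norm_nonneg z) hζ
  have hz0 : z ≠ 0 := by rintro rfl; simp at hne
  have hseg := (strictConvex_closedBall ℝ (0 : ℂ) ‖z‖).openSegment_subset
    (by simp : z ∈ closedBall 0 ‖z‖) hmem hne.symm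
  rw [interior_closedBall _ (norm_ne_zero_iff.2 hz0)] at hseg
  have hle := re_mul_sub_nonpos_of_isMaxOn hF.hasDerivAt hmax hseg
  rw [show deriv F z * (ζ * z - z) = z * deriv F z * ζ - z * deriv F z by ring, sub_re] at hle
  exact sub_nonpos.1 hle

-- Jack's lemma: by the Schwarz lemma `‖ϑ(w) / w‖` is also largest at `w = z`.
lemma exists_mul_deriv_eq_of_isMaxOn_norm {ϑ : ℂ → ℂ} {z : ℂ}
    (hϑ : DifferentiableOn ℂ ϑ (ball 0 ‖z‖)) (hϑz : DifferentiableAt ℂ ϑ z) (hϑ0 : ϑ 0 = 0)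
    (hne : ϑ z ≠ 0) (hmax : IsMaxOn (fun w => ‖ϑ w‖) (ball 0 ‖z‖) z) :
    ∃ m : ℝ, 1 ≤ m ∧ z * deriv ϑ z = m * ϑ z := by
  have hz0 : z ≠ 0 := by rintro rfl; exact hne hϑ0
  have hmul : ∀ w, ϑ w = w * dslope ϑ 0 w := fun w => by
    simpa [hϑ0] using (sub_smul_dslope ϑ 0 w).symm
  have hG : DifferentiableAt ℂ (dslope ϑ 0) z := (differentiableAt_dslope_of_ne hz0).2 hϑz
  have hGz : dslope ϑ 0 z ≠ 0 := right_ne_zero_of_mul (hmul z ▸ hne)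
  have hnorm : ‖dslope ϑ 0 z‖ = ‖ϑ z‖ / ‖z‖ := by
    rw [hmul z, norm_mul, mul_div_cancel_left₀ _ (norm_ne_zero_iff.2 hz0)]
  have hGmax : IsMaxOn (fun w => (dslope ϑ 0 w / dslope ϑ 0 z).re) (ball 0 ‖z‖) z := by
    intro w hw
    have hmaps : MapsTo ϑ (ball 0 ‖z‖) (closedBall (ϑ 0) ‖ϑ z‖) := fun v hv => by
      simpa [hϑ0] using hmax hv
    have hle : ‖dslope ϑ 0 w‖ ≤ ‖dslope ϑ 0 z‖ :=
      hnorm ▸ norm_dslope_le_div_of_mapsTo_ball hϑ hmaps hw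
    have hre : (dslope ϑ 0 w / dslope ϑ 0 z).re ≤ 1 :=
      (re_le_norm _).trans (by rw [norm_div]; exact div_le_one_of_le₀ hle (norm_nonneg _))
    simpa [div_self hGz] using hre
  have hnonneg := mul_deriv_nonneg_of_isMaxOn_re (hG.div_const _) hGmax
  lift z * deriv (fun w => dslope ϑ 0 w / dslope ϑ 0 z) z to ℝ using
    (nonneg_iff.1 hnonneg).2.symm with σ hσeq
  have hderiv : deriv ϑ z = dslope ϑ 0 z + z * deriv (dslope ϑ 0) z := by
    have hprod := (hasDerivAt_id z).mul hG.hasDerivAt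
    simpa using (hprod.congr_of_eventuallyEq (.of_forall hmul)).deriv
  have hσmul : σ * dslope ϑ 0 z = z * deriv (dslope ϑ 0) z := by
    rw [hσeq, deriv_div_const, mul_div_assoc', div_mul_cancel₀ _ hGz]
  refine ⟨1 + σ, by simpa using hnonneg, ?_⟩
  rw [hderiv, hmul z]
  push_cast
  linear_combination -z * hσmul

end RealPart

section Subordination

variable {F G p q : ℂ → ℂ}

lemma mapsTo_ball_of_forall_mapsTo_closedBall {E Y : Type*} [NormedAddCommGroup E]
    [ProperSpace E] [TopologicalSpace Y] {f : E → Y} {U : Set Y} {r : ℝ} (hU : IsOpen U)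
    (hf : ContinuousOn f (ball 0 r)) (h0 : f 0 ∈ U)
    (hstep : ∀ ρ ∈ Ioo 0 r, MapsTo f (ball 0 ρ) U → MapsTo f (closedBall 0 ρ) U) :
    MapsTo f (ball 0 r) U := by
  intro z₁ hz₁
  by_contra hbad
  rw [mem_ball_zero_iff] at hz₁
  have hcompact : IsCompact (closedBall 0 ‖z₁‖ ∩ f ⁻¹' Uᶜ) :=
    (isCompact_closedBall 0 ‖z₁‖).of_isClosed_subset
      ((hf.mono (closedBall_subset_ball hz₁)).preimage_isClosed_of_isClosed isClosed_closedBall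
        hU.isClosed_compl) inter_subset_left
  obtain ⟨z, ⟨hz, hzbad⟩, hmin⟩ :=
    hcompact.exists_isMinOn ⟨z₁, by simp, hbad⟩ continuous_norm.continuousOn
  rw [mem_closedBall_zero_iff] at hz
  have hnorm : 0 < ‖z‖ := norm_pos_iff.2 (by rintro rfl; exact hzbad h0)
  refine hzbad (hstep ‖z‖ ⟨hnorm, hz.trans_lt hz₁⟩ (fun w hw => ?_) (by simp))
  by_contra hwbad
  rw [mem_ball_zero_iff] at hw
  exact hw.not_ge (hmin ⟨mem_closedBall_zero_iff.2 (hw.le.trans hz), hwbad⟩)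

lemma isSubordinate_of_eqOn (hFG : EqOn F G (ball 0 1)) : IsSubordinate F G :=
  ⟨id, analyticOnNhd_id, rfl, fun _ hz => hz, hFG⟩

lemma IsSubordinate.apply_zero (hFG : IsSubordinate F G) : F 0 = G 0 := by
  obtain ⟨ϑ, -, hϑ0, -, heq⟩ := hFG
  rw [heq 0 (mem_ball_self one_pos), hϑ0]

lemma IsSubordinate.exists_norm_le (hFG : IsSubordinate F G) {z : ℂ} (hz : z ∈ ball 0 1) :
    ∃ w, ‖w‖ ≤ ‖z‖ ∧ F z = G w := by
  obtain ⟨ϑ, hϑ, hϑ0, hmaps, heq⟩ := hFG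
  exact ⟨ϑ z, norm_le_norm_of_mapsTo_ball hϑ.differentiableOn
    (fun w hw => ball_subset_closedBall (hmaps w hw)) hϑ0 (by simpa using hz), heq z hz⟩

lemma isSubordinate_of_mapsTo (hG : AnalyticOnNhd ℂ G (ball 0 1)) (hinj : InjOn G (ball 0 1))
    (hF : AnalyticOnNhd ℂ F (ball 0 1)) (h0 : F 0 = G 0)
    (hmaps : MapsTo F (ball 0 1) (G '' ball 0 1)) : IsSubordinate F G :=
  ⟨invFunOn G (ball 0 1) ∘ F, (analyticOnNhd_invFunOn isOpen_ball hG hinj).comp hF hmaps,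
    by simpa [h0] using hinj.leftInvOn_invFunOn (mem_ball_self one_pos),
    fun _ hz => invFunOn_mem (hmaps hz), fun _ hz => (invFunOn_eq (hmaps hz)).symm⟩

lemma exists_mul_deriv_eq_of_norm_lt {ϑ : ℂ → ℂ} {R : ℝ} (hϑ : AnalyticOnNhd ℂ ϑ (ball 0 R))
    (hϑ0 : ϑ 0 = 0) {z₁ : ℂ} (hz₁ : z₁ ∈ ball 0 R) (hlt : ‖z₁‖ < ‖ϑ z₁‖) :
    ∃ z ∈ ball 0 R, ∃ m : ℝ, 1 ≤ m ∧ ‖z‖ < ‖ϑ z‖ ∧ z * deriv ϑ z = m * ϑ z := by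
  have hsub : closedBall 0 ‖z₁‖ ⊆ ball (0 : ℂ) R := closedBall_subset_ball (by simpa using hz₁)
  obtain ⟨z, hz, hmax⟩ := (isCompact_closedBall (0 : ℂ) ‖z₁‖).exists_isMaxOn
    ⟨z₁, by simp⟩ (hϑ.continuousOn.mono hsub).norm
  have hzϑ : ‖z‖ < ‖ϑ z‖ :=
    (mem_closedBall_zero_iff.1 hz).trans_lt (hlt.trans_le (hmax (by simp)))
  have hball : ball 0 ‖z‖ ⊆ closedBall (0 : ℂ) ‖z₁‖ :=
    (ball_subset_ball (mem_closedBall_zero_iff.1 hz)).trans ball_subset_closedBall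
  obtain ⟨m, hm, hderiv⟩ := exists_mul_deriv_eq_of_isMaxOn_norm
    (hϑ.differentiableOn.mono (hball.trans hsub)) (hϑ z (hsub hz)).differentiableAt hϑ0
    (norm_pos_iff.1 ((norm_nonneg z).trans_lt hzϑ)) (hmax.on_subset hball)
  exact ⟨z, hsub hz, m, hm, hzϑ, hderiv⟩

lemma mem_image_closedBall_of_forall_mul_deriv_ne {R : ℝ}
    (hq : AnalyticOnNhd ℂ q (ball 0 1)) (hinj : InjOn q (ball 0 1))
    (hp : AnalyticOnNhd ℂ p (ball 0 R)) (h0 : p 0 = q 0)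
    (hcontact : ∀ z ∈ ball 0 R, ∀ ζ ∈ ball 0 1, ∀ m : ℝ, 1 ≤ m → ‖z‖ < ‖ζ‖ → p z = q ζ →
      z * deriv p z ≠ m * (ζ * deriv q ζ))
    (hmaps : MapsTo p (ball 0 R) (q '' ball 0 1)) {z : ℂ} (hz : z ∈ ball 0 R) :
    p z ∈ q '' closedBall 0 ‖z‖ := by
  set ϑ := invFunOn q (ball 0 1) ∘ p with hϑdef
  have hϑ : AnalyticOnNhd ℂ ϑ (ball 0 R) :=
    (analyticOnNhd_invFunOn isOpen_ball hq hinj).comp hp hmaps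
  have hϑ0 : ϑ 0 = 0 := by
    simpa [hϑdef, h0] using hinj.leftInvOn_invFunOn (mem_ball_self one_pos)
  have hqϑ : ∀ w ∈ ball 0 R, q (ϑ w) = p w := fun w hw => invFunOn_eq (hmaps hw)
  refine ⟨ϑ z, ?_, hqϑ z hz⟩
  by_contra hlt
  rw [mem_closedBall_zero_iff, not_le] at hlt
  obtain ⟨w, hw, m, hm, hwϑ, hderiv⟩ := exists_mul_deriv_eq_of_norm_lt hϑ hϑ0 hz hlt
  have hϑw : ϑ w ∈ ball 0 1 := invFunOn_mem (hmaps hw)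
  have hchain : deriv p w = deriv q (ϑ w) * deriv ϑ w := by
    have hcomp := (hq _ hϑw).differentiableAt.hasDerivAt.comp w
      (hϑ w hw).differentiableAt.hasDerivAt
    exact (hcomp.congr_of_eventuallyEq <| by
      filter_upwards [isOpen_ball.mem_nhds hw] with v hv using (hqϑ v hv).symm).deriv
  exact hcontact w hw (ϑ w) hϑw m hm hwϑ (hqϑ w hw).symm
    (by rw [hchain]; linear_combination deriv q (ϑ w) * hderiv)

-- Miller–Mocanu: if the images `p(‖z‖ < ρ)` outgrow `q(‖z‖ < ρ)`, then Jack's lemma for `q⁻¹ ∘ p`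
-- produces a contact point excluded by `hcontact`.
theorem isSubordinate_of_forall_mul_deriv_ne
    (hq : AnalyticOnNhd ℂ q (ball 0 1)) (hinj : InjOn q (ball 0 1))
    (hp : AnalyticOnNhd ℂ p (ball 0 1)) (h0 : p 0 = q 0)
    (hcontact : ∀ z ∈ ball 0 1, ∀ ζ ∈ ball 0 1, ∀ m : ℝ, 1 ≤ m → ‖z‖ < ‖ζ‖ → p z = q ζ →
      z * deriv p z ≠ m * (ζ * deriv q ζ)) :
    IsSubordinate p q := by
  refine isSubordinate_of_mapsTo hq hinj hp h0 ?_
  refine mapsTo_ball_of_forall_mapsTo_closedBall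
    (isOpen_image_of_injOn isOpen_ball hq hinj isOpen_ball subset_rfl) hp.continuousOn
    (h0 ▸ mem_image_of_mem q (mem_ball_self one_pos)) fun ρ hρ hmaps => ?_
  have hsub : closedBall 0 ρ ⊆ ball (0 : ℂ) 1 := closedBall_subset_ball hρ.2
  have hρ1 : ball 0 ρ ⊆ ball (0 : ℂ) 1 := ball_subset_ball hρ.2.le
  have hclosed : IsClosed (q '' closedBall 0 ρ) :=
    ((isCompact_closedBall 0 ρ).image_of_continuousOn (hq.continuousOn.mono hsub)).isClosed
  have hball : MapsTo p (ball 0 ρ) (q '' closedBall 0 ρ) := fun z hz =>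
    image_mono (closedBall_subset_closedBall (mem_ball_zero_iff.1 hz).le)
      (mem_image_closedBall_of_forall_mul_deriv_ne hq hinj (hp.mono hρ1) h0
        (fun w hw => hcontact w (hρ1 hw)) hmaps hz)
  rw [← closure_ball (0 : ℂ) hρ.1.ne'] at hsub ⊢
  intro z hz
  have hmem := (hp.continuousOn.mono hsub z hz).mono subset_closure |>.mem_closure hz hball
  rw [hclosed.closure_eq] at hmem
  exact image_mono (closedBall_subset_ball hρ.2) hmem

end Subordination

/-- Convex univalent functions of the unit disc: analytic and injective there, with convex image;
no normalization at the origin is imposed. -/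
structure IsConvexUnivalent (h : ℂ → ℂ) : Prop where
  analyticOnNhd : AnalyticOnNhd ℂ h (ball 0 1)
  injOn : InjOn h (ball 0 1)
  convex_image : Convex ℝ (h '' ball 0 1)

namespace IsConvexUnivalent

variable {h : ℂ → ℂ} {z w : ℂ}

lemma isOpen_image (hh : IsConvexUnivalent h) : IsOpen (h '' ball 0 1) :=
  isOpen_image_of_injOn isOpen_ball hh.analyticOnNhd hh.injOn isOpen_ball subset_rfl

lemma deriv_ne_zero (hh : IsConvexUnivalent h) (hz : z ∈ ball 0 1) : deriv h z ≠ 0 :=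
  deriv_ne_zero_of_injOn isOpen_ball hh.analyticOnNhd hh.injOn hz

-- With `w = ζ z` and `‖ζ‖ ≤ 1`, the map `v ↦ a h(v) + b h(ζ v)` is subordinate to `h`.
lemma segment_subset_image_closedBall (hh : IsConvexUnivalent h) (hz : z ∈ ball 0 1)
    (hw : ‖w‖ ≤ ‖z‖) : segment ℝ (h z) (h w) ⊆ h '' closedBall 0 ‖z‖ := by
  rintro _ ⟨a, b, ha, hb, hab, rfl⟩
  have hrot : MapsTo (fun v => w / z * v) (ball 0 1) (ball (0 : ℂ) 1) := fun v hv => by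
    have hnorm : ‖w / z‖ ≤ 1 := by
      rw [norm_div]; exact div_le_one_of_le₀ hw (norm_nonneg z)
    rw [mem_ball_zero_iff] at hv ⊢
    exact (norm_mul_le _ _).trans_lt ((mul_le_of_le_one_left (norm_nonneg v) hnorm).trans_lt hv)
  have hsub : IsSubordinate (fun v => a • h v + b • h (w / z * v)) h := by
    refine isSubordinate_of_mapsTo hh.analyticOnNhd hh.injOn
      ((hh.analyticOnNhd.const_smul (c := a)).add
        ((hh.analyticOnNhd.comp (fun v _ => by fun_prop) hrot).const_smul (c := b)))
      ?_ fun v hv => ?_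
    · simp only [mul_zero, ← add_smul, hab, one_smul]
    · exact hh.convex_image (mem_image_of_mem h hv) (mem_image_of_mem h (hrot hv)) ha hb hab
  obtain ⟨w', hw', heq⟩ := hsub.exists_norm_le hz
  have hwz : w / z * z = w := div_mul_cancel_of_imp fun hz0 => by simpa [hz0] using hw
  exact ⟨w', mem_closedBall_zero_iff.2 hw', by simpa only [hwz] using heq.symm⟩

lemma re_sub_div_nonneg (hh : IsConvexUnivalent h) (hz : z ∈ ball 0 1) (hz0 : z ≠ 0)
    (hw : ‖w‖ ≤ ‖z‖) : 0 ≤ ((h z - h w) / (z * deriv h z)).re := by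
  have hinv : ∀ v ∈ closedBall 0 ‖z‖, invFunOn h (ball 0 1) (h v) = v := fun v hv =>
    hh.injOn.leftInvOn_invFunOn (closedBall_subset_ball (mem_ball_zero_iff.1 hz) hv)
  have hmax : IsMaxOn (fun v => (invFunOn h (ball 0 1) v / z).re) (h '' closedBall 0 ‖z‖)
      (h z) := by
    rintro _ ⟨v, hv, rfl⟩
    have hnorm : ‖v / z‖ ≤ 1 := by
      rw [norm_div]; exact div_le_one_of_le₀ (mem_closedBall_zero_iff.1 hv) (norm_nonneg z)
    simpa [hinv v hv, hinv z (by simp), hz0] using (re_le_norm _).trans hnorm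
  have hle := re_mul_sub_nonpos_of_isMaxOn
    ((hasDerivAt_invFunOn isOpen_ball hh.analyticOnNhd hh.injOn hz).div_const z) hmax
    ((openSegment_subset_segment ℝ _ _).trans (hh.segment_subset_image_closedBall hz hw))
  rw [show (h z - h w) / (z * deriv h z) = -((deriv h z)⁻¹ / z * (h w - h z)) by
    field_simp; ring, neg_re]
  exact neg_nonneg.2 hle

lemma re_sub_div_pos (hh : IsConvexUnivalent h) (hz : z ∈ ball 0 1) (hw : ‖w‖ < ‖z‖) :
    0 < ((h z - h w) / (z * deriv h z)).re := by
  have hz0 : z ≠ 0 := norm_pos_iff.1 ((norm_nonneg w).trans_lt hw)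
  have hsub : ball 0 ‖z‖ ⊆ ball (0 : ℂ) 1 := ball_subset_ball (mem_ball_zero_iff.1 hz).le
  refine (const_or_re_pos_of_re_nonneg (f := fun v => (h z - h v) / (z * deriv h z)) isOpen_ball
    (convex_ball (0 : ℂ) ‖z‖).isPreconnected
    ((analyticOnNhd_const.sub (hh.analyticOnNhd.mono hsub)).div_const)
    fun v hv => hh.re_sub_div_nonneg hz hz0 (mem_ball_zero_iff.1 hv).le).resolve_left ?_ w
      (mem_ball_zero_iff.2 hw)
  rintro ⟨c, hc⟩
  have h0 : (0 : ℂ) ∈ ball 0 ‖z‖ := mem_ball_self (norm_pos_iff.2 hz0)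
  have hhalf : z / 2 ∈ ball 0 ‖z‖ := by simpa using hz0
  have heq := (hc 0 h0).trans (hc _ hhalf).symm
  rw [div_left_inj' (mul_ne_zero hz0 (hh.deriv_ne_zero hz)), sub_right_inj] at heq
  exact div_ne_zero hz0 two_ne_zero (hh.injOn (hsub h0) (hsub hhalf) heq).symm

theorem isSubordinate_of_add_mul_deriv_div {φ : ℂ → ℂ} {μ : ℂ} (hh : IsConvexUnivalent h)
    (hφ : AnalyticOnNhd ℂ φ (ball 0 1)) (hμ : 0 < μ.re)
    (hsub : IsSubordinate (fun z => φ z + z * deriv φ z / μ) h) : IsSubordinate φ h := by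
  have h0 : φ 0 = h 0 := by simpa using hsub.apply_zero
  refine isSubordinate_of_forall_mul_deriv_ne hh.analyticOnNhd hh.injOn hφ h0 ?_
  intro z hz ζ hζ m hm hzζ hcontact hderiv
  obtain ⟨w, hwz, hw⟩ := hsub.exists_norm_le hz
  have hζ0 : ζ ≠ 0 := norm_pos_iff.1 ((norm_nonneg z).trans_lt hzζ)
  have hquot : (h ζ - h w) / (ζ * deriv h ζ) = -(m * μ⁻¹) := by
    rw [div_eq_iff (mul_ne_zero hζ0 (hh.deriv_ne_zero hζ)), ← hw, hderiv, hcontact]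
    ring
  have hneg : 0 < m * (μ⁻¹).re := mul_pos (one_pos.trans_le hm) (re_inv_pos hμ)
  have hpos := hh.re_sub_div_pos hζ (hwz.trans_lt hzζ)
  rw [hquot, neg_re, re_ofReal_mul] at hpos
  linarith

end IsConvexUnivalent

section Bernardi

open MeasureTheory intervalIntegral

/-- The Bernardi integral `h̃(z) = μ ∫₀¹ u^{μ-1} h(uz) du`; for `Re μ > 0` it is the solution `q`,
analytic at the origin, of `q(z) + z q'(z) / μ = h(z)`. -/
noncomputable def bernardiTransform (μ : ℂ) (h : ℂ → ℂ) (z : ℂ) : ℂ :=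
  μ * ∫ u in (0 : ℝ)..1, (u : ℂ) ^ (μ - 1) * h (u * z)

variable {h : ℂ → ℂ} {μ z : ℂ} {r : ℝ}

lemma ofReal_mul_mem_ball {u : ℝ} (hu : u ∈ Icc (0 : ℝ) 1) (hz : z ∈ ball 0 r) :
    u * z ∈ ball 0 r := by
  simpa using balanced_ball_zero.smul_mem (a := (u : ℂ))
    (by simpa [abs_of_nonneg hu.1] using hu.2) hz

lemma intervalIntegrable_cpow_mul (hμ : 0 < μ.re) {g : ℝ → ℂ} (hg : ContinuousOn g (Icc 0 1)) :
    IntervalIntegrable (fun u : ℝ => (u : ℂ) ^ (μ - 1) * g u) volume 0 1 :=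
  (intervalIntegrable_cpow' (by simpa using hμ)).mul_continuousOn
    (by rwa [uIcc_of_le zero_le_one])

lemma continuousOn_comp_ofReal_mul (hh : ContinuousOn h (ball 0 r)) (hz : z ∈ ball 0 r) :
    ContinuousOn (fun u : ℝ => h (u * z)) (Icc 0 1) :=
  hh.comp (by fun_prop) fun _ hu => ofReal_mul_mem_ball hu hz

lemma intervalIntegrable_cpow_mul_comp (hμ : 0 < μ.re) (hh : ContinuousOn h (ball 0 r))
    (hz : z ∈ ball 0 r) :
    IntervalIntegrable (fun u : ℝ => (u : ℂ) ^ (μ - 1) * h (u * z)) volume 0 1 :=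
  intervalIntegrable_cpow_mul hμ (continuousOn_comp_ofReal_mul hh hz)

lemma intervalIntegrable_cpow_mul_deriv (hμ : 0 < μ.re) (hh : AnalyticOnNhd ℂ h (ball 0 r))
    (hz : z ∈ ball 0 r) :
    IntervalIntegrable (fun u : ℝ => (u : ℂ) ^ (μ - 1) * (u * deriv h (u * z))) volume 0 1 :=
  intervalIntegrable_cpow_mul hμ <| continuous_ofReal.continuousOn.mul
    (continuousOn_comp_ofReal_mul hh.deriv.continuousOn hz)

lemma hasDerivAt_integral_cpow_mul (hμ : 0 < μ.re) (hh : AnalyticOnNhd ℂ h (ball 0 r))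
    (hz : z ∈ ball 0 r) :
    HasDerivAt (fun w => ∫ u in (0 : ℝ)..1, (u : ℂ) ^ (μ - 1) * h (u * w))
      (∫ u in (0 : ℝ)..1, (u : ℂ) ^ (μ - 1) * (u * deriv h (u * z))) z := by
  obtain ⟨s, hzs, hsr⟩ := exists_between (mem_ball_zero_iff.1 hz)
  have hsub : ball (0 : ℂ) s ⊆ ball 0 r := ball_subset_ball hsr.le
  obtain ⟨C, hC⟩ := (isCompact_closedBall (0 : ℂ) s).exists_bound_of_continuousOn
    (hh.deriv.continuousOn.mono (closedBall_subset_ball hsr))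
  have hIcc : ∀ u ∈ uIoc (0 : ℝ) 1, u ∈ Icc (0 : ℝ) 1 := fun u hu =>
    Ioc_subset_Icc_self (by rwa [uIoc_of_le zero_le_one] at hu)
  refine (hasDerivAt_integral_of_dominated_loc_of_deriv_le (s := ball 0 s)
    (F' := fun w u => (u : ℂ) ^ (μ - 1) * (u * deriv h (u * w)))
    (bound := fun u : ℝ => ‖(u : ℂ) ^ (μ - 1) * C‖)
    (isOpen_ball.mem_nhds (mem_ball_zero_iff.2 hzs)) ?_
    (intervalIntegrable_cpow_mul_comp hμ hh.continuousOn hz)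
    (intervalIntegrable_cpow_mul_deriv hμ hh hz).def'.aestronglyMeasurable
    (.of_forall fun u hu w hw => ?_) (intervalIntegrable_cpow_mul hμ continuousOn_const).norm
    (.of_forall fun u hu w hw => ?_)).2
  · filter_upwards [isOpen_ball.mem_nhds hz] with w hw
    exact (intervalIntegrable_cpow_mul_comp hμ hh.continuousOn hw).def'.aestronglyMeasurable
  · have hbound := hC _ (ball_subset_closedBall (ofReal_mul_mem_ball (hIcc u hu) hw))
    have hu1 : ‖(u : ℂ)‖ ≤ 1 := by simpa [abs_of_nonneg (hIcc u hu).1] using (hIcc u hu).2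
    rw [norm_mul, norm_mul, norm_mul, norm_real C]
    gcongr
    exact (mul_le_of_le_one_left (norm_nonneg _) hu1).trans (hbound.trans (Real.le_norm_self C))
  · have hhu := (hh _ (ofReal_mul_mem_ball (hIcc u hu) (hsub hw))).differentiableAt.hasDerivAt
    refine ((hhu.comp w (hasDerivAt_const_mul (u : ℂ))).const_mul _).congr_deriv ?_
    rw [mul_comm (u : ℂ) (deriv h _)]

lemma hasDerivAt_cpow_mul_comp {u : ℝ} (hu : 0 < u) (hh : DifferentiableAt ℂ h (u * z)) :
    HasDerivAt (fun v : ℝ => (v : ℂ) ^ μ * h (v * z))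
      (μ * ((u : ℂ) ^ (μ - 1) * h (u * z)) +
        z * ((u : ℂ) ^ (μ - 1) * (u * deriv h (u * z)))) u := by
  have hu0 : (u : ℂ) ≠ 0 := ofReal_ne_zero.2 hu.ne'
  have hpow : HasDerivAt (fun v : ℂ => v ^ μ) (μ * (u : ℂ) ^ (μ - 1)) u := by
    simpa using (hasDerivAt_id (u : ℂ)).cpow_const (c := μ) (Or.inl (by simpa using hu))
  have hsplit : (u : ℂ) ^ μ = (u : ℂ) ^ (μ - 1) * u := by
    rw [cpow_sub _ _ hu0, cpow_one, div_mul_cancel₀ _ hu0]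
  refine (hpow.mul (hh.hasDerivAt.comp (u : ℂ)
    (hasDerivAt_mul_const z))).comp_ofReal.congr_deriv ?_
  rw [comp_apply, hsplit]
  ring

lemma integral_cpow_mul_add_mul_deriv (hμ : 0 < μ.re) (hh : AnalyticOnNhd ℂ h (ball 0 r))
    (hz : z ∈ ball 0 r) :
    μ * (∫ u in (0 : ℝ)..1, (u : ℂ) ^ (μ - 1) * h (u * z)) +
      z * ∫ u in (0 : ℝ)..1, (u : ℂ) ^ (μ - 1) * (u * deriv h (u * z)) = h z := by
  have hμ0 : μ ≠ 0 := ne_of_apply_ne re hμ.ne'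
  have hint := (intervalIntegrable_cpow_mul_comp hμ hh.continuousOn hz).const_mul μ
  have hint' := (intervalIntegrable_cpow_mul_deriv hμ hh hz).const_mul z
  have hftc := integral_eq_sub_of_hasDerivAt_of_le zero_le_one
    ((continuous_ofReal_cpow_const hμ).continuousOn.mul
      (continuousOn_comp_ofReal_mul hh.continuousOn hz))
    (fun u hu => hasDerivAt_cpow_mul_comp hu.1
      (hh _ (ofReal_mul_mem_ball (Ioo_subset_Icc_self hu) hz)).differentiableAt)
    (hint.add hint')
  rw [integral_add hint hint', intervalIntegral.integral_const_mul,
    intervalIntegral.integral_const_mul] at hftc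
  simpa [zero_cpow hμ0] using hftc

lemma hasDerivAt_bernardiTransform (hμ : 0 < μ.re) (hh : AnalyticOnNhd ℂ h (ball 0 r))
    (hz : z ∈ ball 0 r) :
    HasDerivAt (bernardiTransform μ h)
      (μ * ∫ u in (0 : ℝ)..1, (u : ℂ) ^ (μ - 1) * (u * deriv h (u * z))) z :=
  (hasDerivAt_integral_cpow_mul hμ hh hz).const_mul μ

lemma analyticOnNhd_bernardiTransform (hμ : 0 < μ.re) (hh : AnalyticOnNhd ℂ h (ball 0 r)) :
    AnalyticOnNhd ℂ (bernardiTransform μ h) (ball 0 r) :=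
  DifferentiableOn.analyticOnNhd (fun _ hz =>
    (hasDerivAt_bernardiTransform hμ hh hz).differentiableAt.differentiableWithinAt) isOpen_ball

lemma bernardiTransform_add_mul_deriv_div (hμ : 0 < μ.re) (hh : AnalyticOnNhd ℂ h (ball 0 r))
    (hz : z ∈ ball 0 r) :
    bernardiTransform μ h z + z * deriv (bernardiTransform μ h) z / μ = h z := by
  have hμ0 : μ ≠ 0 := ne_of_apply_ne re hμ.ne'
  rw [(hasDerivAt_bernardiTransform hμ hh hz).deriv, mul_left_comm, mul_div_cancel_left₀ _ hμ0]
  exact integral_cpow_mul_add_mul_deriv hμ hh hz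

lemma add_one_mul_deriv_bernardiTransform_zero (hμ : 0 < μ.re) (hr : 0 < r)
    (hh : AnalyticOnNhd ℂ h (ball 0 r)) :
    (μ + 1) * deriv (bernardiTransform μ h) 0 = μ * deriv h 0 := by
  have hμ0 : μ ≠ 0 := ne_of_apply_ne re hμ.ne'
  have h0 : (0 : ℂ) ∈ ball 0 r := mem_ball_self hr
  have hq := analyticOnNhd_bernardiTransform hμ hh 0 h0
  have hode := hq.differentiableAt.hasDerivAt.add
    (((hasDerivAt_id 0).mul hq.deriv.differentiableAt.hasDerivAt).div_const μ)
  have hderiv := (hode.congr_of_eventuallyEq (f₁ := h) <| by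
    filter_upwards [isOpen_ball.mem_nhds h0] with z hz
    exact (bernardiTransform_add_mul_deriv_div hμ hh hz).symm).deriv
  rw [hderiv]
  simp only [one_mul, id_eq, zero_mul, add_zero]
  field_simp

end Bernardi

namespace IsConvexUnivalent

variable {h φ : ℂ → ℂ} {μ z : ℂ}

theorem bernardiTransform_isSubordinate (hh : IsConvexUnivalent h) (hμ : 0 < μ.re) :
    IsSubordinate (bernardiTransform μ h) h :=
  hh.isSubordinate_of_add_mul_deriv_div (analyticOnNhd_bernardiTransform hμ hh.analyticOnNhd) hμ <|
    isSubordinate_of_eqOn fun _ hz => bernardiTransform_add_mul_deriv_div hμ hh.analyticOnNhd hz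

lemma re_deriv_bernardiTransform_div_nonneg (hh : IsConvexUnivalent h) (hμ : 0 < μ.re)
    (hz : z ∈ ball 0 1) (hz0 : z ≠ 0) :
    0 ≤ (μ⁻¹ * (deriv (bernardiTransform μ h) z / deriv h z)).re := by
  obtain ⟨w, hwz, hw⟩ := (hh.bernardiTransform_isSubordinate hμ).exists_norm_le hz
  convert hh.re_sub_div_nonneg hz hz0 hwz using 2
  rw [← hw, ← bernardiTransform_add_mul_deriv_div hμ hh.analyticOnNhd hz]
  field_simp
  ring

lemma re_deriv_bernardiTransform_zero_div_pos (hh : IsConvexUnivalent h) (hμ : 0 < μ.re) :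
    0 < (μ⁻¹ * (deriv (bernardiTransform μ h) 0 / deriv h 0)).re := by
  have hμ0 : μ ≠ 0 := ne_of_apply_ne re hμ.ne'
  have hμ1 : 0 < (μ + 1).re := by simpa using add_pos hμ one_pos
  have hμ1' : μ + 1 ≠ 0 := ne_of_apply_ne re hμ1.ne'
  have hderiv := add_one_mul_deriv_bernardiTransform_zero hμ one_pos hh.analyticOnNhd
  have hquot : μ⁻¹ * (deriv (bernardiTransform μ h) 0 / deriv h 0) = (μ + 1)⁻¹ := by
    have hh'0 := hh.deriv_ne_zero (mem_ball_self one_pos)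
    field_simp
    linear_combination hderiv
  exact hquot ▸ re_inv_pos hμ1

lemma re_deriv_bernardiTransform_div_pos (hh : IsConvexUnivalent h) (hμ : 0 < μ.re)
    (hz : z ∈ ball 0 1) :
    0 < (μ⁻¹ * (deriv (bernardiTransform μ h) z / deriv h z)).re := by
  have hpos0 := hh.re_deriv_bernardiTransform_zero_div_pos hμ
  have hanalytic : AnalyticOnNhd ℂ
      (fun v => μ⁻¹ * (deriv (bernardiTransform μ h) v / deriv h v)) (ball 0 1) :=
    analyticOnNhd_const.mul <| (analyticOnNhd_bernardiTransform hμ hh.analyticOnNhd).deriv.div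
      hh.analyticOnNhd.deriv fun _ => hh.deriv_ne_zero
  have hnonneg : ∀ v ∈ ball 0 1,
      0 ≤ (μ⁻¹ * (deriv (bernardiTransform μ h) v / deriv h v)).re := fun v hv => by
    rcases eq_or_ne v 0 with rfl | hv0
    · exact hpos0.le
    · exact hh.re_deriv_bernardiTransform_div_nonneg hμ hv hv0
  rcases const_or_re_pos_of_re_nonneg isOpen_ball (convex_ball 0 1).isPreconnected hanalytic
    hnonneg with ⟨c, hc⟩ | hpos
  · rwa [hc z hz, ← hc 0 (mem_ball_self one_pos)]
  · exact hpos z hz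

-- `h̃ ∘ h⁻¹` is univalent on the convex domain `h(𝔻)` by the Noshiro–Warschawski criterion.
theorem injOn_bernardiTransform (hh : IsConvexUnivalent h) (hμ : 0 < μ.re) :
    InjOn (bernardiTransform μ h) (ball 0 1) := by
  set k := invFunOn h (ball 0 1)
  have hk : ∀ z ∈ ball 0 1, k (h z) = z := hh.injOn.leftInvOn_invFunOn
  have hderiv : ∀ z ∈ ball 0 1, HasDerivAt (bernardiTransform μ h ∘ k)
      (deriv (bernardiTransform μ h) z / deriv h z) (h z) := fun z hz => by
    have hq := (analyticOnNhd_bernardiTransform hμ hh.analyticOnNhd z hz).differentiableAt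
    rw [← hk z hz] at hq
    simpa only [hk z hz, div_eq_mul_inv] using hq.hasDerivAt.comp (h z)
      (hasDerivAt_invFunOn isOpen_ball hh.analyticOnNhd hh.injOn hz)
  have hinj : InjOn (bernardiTransform μ h ∘ k) (h '' ball 0 1) := by
    refine injOn_of_re_mul_deriv_pos (c := μ⁻¹) hh.isOpen_image hh.convex_image ?_ ?_
    · rintro _ ⟨z, hz, rfl⟩
      exact (hderiv z hz).differentiableAt.differentiableWithinAt
    · rintro _ ⟨z, hz, rfl⟩
      rw [(hderiv z hz).deriv]
      exact hh.re_deriv_bernardiTransform_div_pos hμ hz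
  exact (hinj.comp hh.injOn (mapsTo_image h _)).congr fun z hz => by
    simp only [comp_apply, hk z hz]

-- At a contact point `h(ζ) - h(w) = (1 - m) (h(ζ) - h̃(ζ))` with `‖w‖ < ‖ζ‖`; in the direction
-- `ζ h'(ζ)` the left side is positive while the right side is nonpositive.
theorem isSubordinate_bernardiTransform (hh : IsConvexUnivalent h)
    (hφ : AnalyticOnNhd ℂ φ (ball 0 1)) (hμ : 0 < μ.re)
    (hsub : IsSubordinate (fun z => φ z + z * deriv φ z / μ) h) :
    IsSubordinate φ (bernardiTransform μ h) := by
  have hq_sub := hh.bernardiTransform_isSubordinate hμ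
  have h0 : φ 0 = bernardiTransform μ h 0 := by
    simpa [hq_sub.apply_zero] using hsub.apply_zero
  refine isSubordinate_of_forall_mul_deriv_ne
    (analyticOnNhd_bernardiTransform hμ hh.analyticOnNhd) (hh.injOn_bernardiTransform hμ) hφ h0 ?_
  intro z hz ζ hζ m hm hzζ hcontact hderiv
  have hζ0 : ζ ≠ 0 := norm_pos_iff.1 ((norm_nonneg z).trans_lt hzζ)
  obtain ⟨w, hwz, hw⟩ := hsub.exists_norm_le hz
  obtain ⟨v, hvζ, hv⟩ := hq_sub.exists_norm_le hζ
  have hode := bernardiTransform_add_mul_deriv_div hμ hh.analyticOnNhd hζ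
  have hkey : (h ζ - h w) / (ζ * deriv h ζ) =
      (1 - m : ℝ) * ((h ζ - h v) / (ζ * deriv h ζ)) := by
    rw [← mul_div_assoc, ← hw, hderiv, hcontact, ← hv, ← hode]
    push_cast
    ring
  have hpos := hh.re_sub_div_pos hζ (hwz.trans_lt hzζ)
  rw [hkey, re_ofReal_mul] at hpos
  exact hpos.not_ge
    (mul_nonpos_of_nonpos_of_nonneg (sub_nonpos.2 hm) (hh.re_sub_div_nonneg hζ hζ0 hvζ))

end IsConvexUnivalent

theorem stmt10_general {h φ : ℂ → ℂ} {μ : ℂ} (hh : IsConvexUnivalent h)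
    (hφ : AnalyticOnNhd ℂ φ (ball 0 1)) (hμ : 0 < μ.re)
    (hsub : IsSubordinate (fun z => φ z + z * deriv φ z / μ) h) :
    IsSubordinate φ (bernardiTransform μ h) ∧ IsSubordinate (bernardiTransform μ h) h :=
  ⟨hh.isSubordinate_bernardiTransform hφ hμ hsub, hh.bernardiTransform_isSubordinate hμ⟩

/-- Hallenbeck–Ruscheweyh lemma: if `h` is convex univalent with
`h(0)=1`, `φ(0)=1`, `Re μ > 0`, and `φ(z) + zφ'(z)/μ ≺ h(z)`, then `φ ≺ h̃ ≺ h`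
where `h̃(z) = μ ∫₀¹ u^{μ-1} h(uz) du`. -/
theorem stmt10 (h φ : ℂ → ℂ) (μ : ℂ)
    (hh : AnalyticOnNhd ℂ h (ball 0 1)) (hh0 : h 0 = 1)
    (hinj : InjOn h (ball 0 1)) (hconv : Convex ℝ (h '' ball 0 1))
    (hφ : AnalyticOnNhd ℂ φ (ball 0 1)) (hφ0 : φ 0 = 1)
    (hμ : 0 < μ.re)
    (hsub : IsSubordinate (fun z => φ z + z * deriv φ z / μ) h) :
    IsSubordinate φ
        (fun z => μ * ∫ u in (0:ℝ)..1, (u : ℂ) ^ (μ - 1) * h ((u : ℂ) * z)) ∧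
      IsSubordinate
        (fun z => μ * ∫ u in (0:ℝ)..1, (u : ℂ) ^ (μ - 1) * h ((u : ℂ) * z)) h :=
  stmt10_general ⟨hh, hinj, hconv⟩ hφ hμ hsub
end

section
/- Let ζ ≥ 1 be a real number and let w ∈ ℂ with Re w > 0. Then Re(w^{1/ζ}) ≥ (Re w)^{1/ζ}, where w^{1/ζ} denotes the principal complex power. -/
open Complex

/-!
In polar form `w = r * exp (i * θ)` with `|θ| ≤ π / 2`, the factor `r ^ s` cancels and the claim
becomes `cos θ ^ s ≤ cos (s * θ)` for `0 ≤ s ≤ 1`. The affine interpolation `1 - s + s * cos θ`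
separates the two sides: it dominates `cos θ ^ s` by Bernoulli's inequality and is dominated by
`cos (s * θ)` by concavity of the cosine between `0` and `θ`.
-/

section

variable {s θ : ℝ}

theorem one_sub_add_mul_cos_le_cos_mul (hs₀ : 0 ≤ s) (hs₁ : s ≤ 1)
    (hθ : θ ∈ Set.Icc (-(Real.pi / 2)) (Real.pi / 2)) :
    1 - s + s * Real.cos θ ≤ Real.cos (s * θ) := by
  have zero_mem : (0 : ℝ) ∈ Set.Icc (-(Real.pi / 2)) (Real.pi / 2) := by
    constructor <;> linarith [Real.pi_pos]
  simpa using strictConcaveOn_cos_Icc.concaveOn.2 zero_mem hθ (sub_nonneg.2 hs₁) hs₀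
    (sub_add_cancel 1 s)

theorem cos_rpow_le_cos_mul (hs₀ : 0 ≤ s) (hs₁ : s ≤ 1)
    (hθ : θ ∈ Set.Icc (-(Real.pi / 2)) (Real.pi / 2)) :
    Real.cos θ ^ s ≤ Real.cos (s * θ) := by
  have neg_one_le : -1 ≤ Real.cos θ - 1 := by linarith [Real.cos_nonneg_of_mem_Icc hθ]
  calc
    Real.cos θ ^ s = (1 + (Real.cos θ - 1)) ^ s := by rw [add_sub_cancel]
    _ ≤ 1 + s * (Real.cos θ - 1) := rpow_one_add_le_one_add_mul_self neg_one_le hs₀ hs₁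
    _ = 1 - s + s * Real.cos θ := by ring
    _ ≤ Real.cos (s * θ) := one_sub_add_mul_cos_le_cos_mul hs₀ hs₁ hθ

theorem re_rpow_le_re_cpow (hs₀ : 0 ≤ s) (hs₁ : s ≤ 1) {w : ℂ} (hw : 0 ≤ w.re) :
    w.re ^ s ≤ (w ^ (s : ℂ)).re := by
  have arg_mem : arg w ∈ Set.Icc (-(Real.pi / 2)) (Real.pi / 2) :=
    abs_le.1 (abs_arg_le_pi_div_two_iff.2 hw)
  calc
    w.re ^ s = (‖w‖ * Real.cos (arg w)) ^ s := by rw [norm_mul_cos_arg]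
    _ = ‖w‖ ^ s * Real.cos (arg w) ^ s :=
      Real.mul_rpow (norm_nonneg w) (Real.cos_nonneg_of_mem_Icc arg_mem)
    _ ≤ ‖w‖ ^ s * Real.cos (s * arg w) := by
      gcongr
      exact cos_rpow_le_cos_mul hs₀ hs₁ arg_mem
    _ = (w ^ (s : ℂ)).re := by rw [cpow_ofReal_re, mul_comm s]

end

/-- for real `ζ ≥ 1` and `Re w > 0`,
`Re(w^{1/ζ}) ≥ (Re w)^{1/ζ}` (principal complex power, real power on the right). -/
theorem stmt12 (ζ : ℝ) (hζ : 1 ≤ ζ) (w : ℂ) (hw : 0 < w.re) :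
    w.re ^ (1 / ζ) ≤ (w ^ ((1 / ζ : ℝ) : ℂ)).re := by
  have exponent_nonneg : 0 ≤ 1 / ζ := by positivity
  have exponent_le_one : 1 / ζ ≤ 1 := div_le_one_of_le₀ hζ (zero_le_one.trans hζ)
  exact re_rpow_le_re_cpow exponent_nonneg exponent_le_one hw.le
end
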